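/- For every a ∈ ℂ, every δ with 0 < δ < 1, and every r > 0, one has ∫₀^{2π} dθ / |re^{iθ} − a|^δ ≤ (2π / (1−δ)) · (1 / r^δ). -/

import Mathlib

open MeasureTheory Filter Topology Metric

noncomputable section

/-- Positive part of the logarithm: `log⁺ x = max (log x) 0`. -/
def logPlus (x : ℝ) : ℝ := max (Real.log x) 0

/-- The point `r e^{iθ}` on the circle of radius `r`. -/
def circ (r θ : ℝ) : ℂ := (r : ℂ) * Complex.exp (θ * Complex.I)

/-- Nevanlinna proximity function `m(r, f)`. -/
def nevm (f : ℂ → ℂ) (r : ℝ) : ℝ :=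
  (2 * Real.pi)⁻¹ * ∫ θ in (0:ℝ)..(2 * Real.pi), logPlus ‖f (circ r θ)‖

/-- Order of the pole of `f` at `x` (`0` if `f` extends analytically over `x`);
determined through the punctured neighbourhood of `x`. -/
def poleOrd (f : ℂ → ℂ) (x : ℂ) : ℕ :=
  sInf {n : ℕ | ∃ g : ℂ → ℂ, AnalyticAt ℂ g x ∧
    ∀ᶠ w in 𝓝[≠] x, (w - x) ^ n * f w = g w}

/-- Unintegrated counting function `n(r, f)`: number of poles of `f` in `|z| ≤ r`,
counted with multiplicity. -/
def nevn (f : ℂ → ℂ) (r : ℝ) : ℕ := ∑ᶠ z ∈ closedBall (0:ℂ) r, poleOrd f z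

/-- Integrated counting function `N(r, f)`. -/
def nevN (f : ℂ → ℂ) (r : ℝ) : ℝ :=
  (∫ t in (0:ℝ)..r, ((nevn f t : ℝ) - (nevn f 0 : ℝ)) / t) + (nevn f 0 : ℝ) * Real.log r

/-- Nevanlinna characteristic `T(r, f) = m(r, f) + N(r, f)`. -/
def nevT (f : ℂ → ℂ) (r : ℝ) : ℝ := nevm f r + nevN f r

/-- A subset of `(0, ∞)` has finite logarithmic measure: `∫_E dr/r < ∞`. -/
def FinLogMeasure (E : Set ℝ) : Prop :=
  E ⊆ Set.Ioi 0 ∧ ∫⁻ r in E, ENNReal.ofReal r⁻¹ < ⊤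

/-- `f` is a non-constant function. -/
def Nonconstant (f : ℂ → ℂ) : Prop := ¬ ∃ a : ℂ, ∀ z : ℂ, f z = a

/-- `f` has finite order: `limsup_{r→∞} log T(r,f) / log r < ∞`. -/
def FiniteOrder (f : ℂ → ℂ) : Prop :=
  IsBoundedUnder (· ≤ ·) atTop fun r : ℝ => Real.log (nevT f r) / Real.log r

end

/-!
The distance from `a` to `c + R e^{iθ}` is at least the distance of `c + R e^{iθ}` to the line
through `a` and the centre `c`, which is `|R| |sin (θ - arg (a - c))|`. Hence, for `-1 < s ≤ 0`,
`‖c + R e^{iθ} - a‖ ^ s` is dominated by a power of `|sin|`. By `π`-periodicity and Jordan's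
inequality `|sin x| ≥ (2 / π) |x|` on `[-π / 2, π / 2]`, the integral of that power is at most an
explicit integral of a power of `|x|`, which already gives the constant `2 π / (s + 1)`.
-/

open scoped Real

section

variable {s : ℝ}

lemma intervalIntegrable_abs_rpow (hs : -1 < s) (a b : ℝ) :
    IntervalIntegrable (fun x : ℝ ↦ |x| ^ s) volume a b := by
  refine intervalIntegrable_of_even (fun x ↦ by rw [abs_neg]) fun {x} hx ↦ ?_
  refine (intervalIntegral.intervalIntegrable_rpow' hs).congr fun y hy ↦ ?_
  rw [Set.uIoc_of_le hx.le] at hy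
  simp only [abs_of_pos hy.1]

lemma integral_abs_rpow_symm (hs : -1 < s) {b : ℝ} (hb : 0 ≤ b) :
    ∫ x in -b..b, |x| ^ s = 2 * (b ^ (s + 1) / (s + 1)) := by
  have right : ∫ x in (0 : ℝ)..b, |x| ^ s = b ^ (s + 1) / (s + 1) := calc
    _ = ∫ x in (0 : ℝ)..b, x ^ s :=
      intervalIntegral.integral_congr fun x hx ↦ by
        rw [Set.uIcc_of_le hb] at hx
        simp only [abs_of_nonneg hx.1]
    _ = b ^ (s + 1) / (s + 1) := by
      rw [integral_rpow (Or.inl hs), Real.zero_rpow (by linarith), sub_zero]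
  have left : ∫ x in -b..0, |x| ^ s = ∫ x in (0 : ℝ)..b, |x| ^ s := by
    simpa using (intervalIntegral.integral_comp_neg (a := 0) (b := b) fun x : ℝ ↦ |x| ^ s).symm
  rw [← intervalIntegral.integral_add_adjacent_intervals (intervalIntegrable_abs_rpow hs (-b) 0)
    (intervalIntegrable_abs_rpow hs 0 b), left, right, two_mul]

lemma ae_sin_sub_ne_zero (α : ℝ) : ∀ᵐ θ : ℝ, Real.sin (θ - α) ≠ 0 := by
  filter_upwards [(Set.countable_range fun n : ℤ ↦ n * π + α).ae_notMem volume] with θ hθ h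
  obtain ⟨n, hn⟩ := Real.sin_eq_zero_iff.mp h
  exact hθ ⟨n, by simp only [hn, sub_add_cancel]⟩

lemma periodic_abs_sin_rpow (s : ℝ) : Function.Periodic (fun x ↦ |Real.sin x| ^ s) π :=
  fun x ↦ by simp only [Real.sin_add_pi, abs_neg]

lemma abs_sin_rpow_le (hs : s ≤ 0) {x : ℝ} (hx : |x| ≤ π / 2) :
    |Real.sin x| ^ s ≤ (2 / π) ^ s * |x| ^ s := by
  obtain rfl | hx0 := eq_or_ne x 0
  · rcases hs.eq_or_lt with rfl | hs
    · simp
    · simp [Real.zero_rpow hs.ne]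
  · rw [← Real.mul_rpow (by positivity) (abs_nonneg x)]
    exact Real.rpow_le_rpow_of_nonpos (by positivity) (Real.mul_abs_le_abs_sin hx) hs

lemma intervalIntegrable_abs_sin_rpow (hs : -1 < s) (hs0 : s ≤ 0) (a b : ℝ) :
    IntervalIntegrable (fun x ↦ |Real.sin x| ^ s) volume a b := by
  refine (periodic_abs_sin_rpow s).intervalIntegrable (t := -(π / 2)) Real.pi_ne_zero ?_ a b
  refine ((intervalIntegrable_abs_rpow hs _ _).const_mul ((2 / π) ^ s)).mono_fun'
    ((Real.measurable_sin.abs.pow_const s).aestronglyMeasurable) ?_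
  filter_upwards [ae_restrict_mem measurableSet_uIoc] with x hx
  rw [Set.uIoc_of_le (by linarith [Real.pi_pos])] at hx
  rw [Real.norm_of_nonneg (by positivity)]
  exact abs_sin_rpow_le hs0 (abs_le.mpr ⟨hx.1.le, by linarith [hx.2]⟩)

lemma integral_abs_sin_rpow_le (hs : -1 < s) (hs0 : s ≤ 0) (t : ℝ) :
    ∫ x in t..t + π, |Real.sin x| ^ s ≤ π / (s + 1) := by
  have hpi : (0 : ℝ) < π / 2 := by positivity
  calc ∫ x in t..t + π, |Real.sin x| ^ s
    _ = ∫ x in -(π / 2)..π / 2, |Real.sin x| ^ s := by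
      rw [(periodic_abs_sin_rpow s).intervalIntegral_add_eq t (-(π / 2))]
      congr 1
      ring
    _ ≤ ∫ x in -(π / 2)..π / 2, (2 / π) ^ s * |x| ^ s :=
      intervalIntegral.integral_mono_on (by linarith) (intervalIntegrable_abs_sin_rpow hs hs0 _ _)
        ((intervalIntegrable_abs_rpow hs _ _).const_mul _)
        fun x hx ↦ abs_sin_rpow_le hs0 (abs_le.mpr hx)
    _ = π / (s + 1) * ((2 / π) ^ s * (π / 2) ^ s) := by
      rw [intervalIntegral.integral_const_mul, integral_abs_rpow_symm hs hpi.le,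
        Real.rpow_add_one hpi.ne']
      ring
    _ = π / (s + 1) := by
      rw [← inv_div π 2, Real.inv_rpow hpi.le,
        inv_mul_cancel₀ (Real.rpow_pos_of_pos hpi s).ne', mul_one]

lemma intervalIntegrable_abs_sin_sub_rpow (hs : -1 < s) (hs0 : s ≤ 0) (α a b : ℝ) :
    IntervalIntegrable (fun θ ↦ |Real.sin (θ - α)| ^ s) volume a b := by
  simpa using (intervalIntegrable_abs_sin_rpow hs hs0 (a - α) (b - α)).comp_sub_right α

lemma integral_abs_sin_sub_rpow_le (hs : -1 < s) (hs0 : s ≤ 0) (α : ℝ) :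
    ∫ θ in (0 : ℝ)..2 * π, |Real.sin (θ - α)| ^ s ≤ 2 * π / (s + 1) := by
  have h := intervalIntegrable_abs_sin_rpow hs hs0
  rw [intervalIntegral.integral_comp_sub_right (fun x ↦ |Real.sin x| ^ s),
    ← intervalIntegral.integral_add_adjacent_intervals (h _ (0 - α + π)) (h _ _),
    show 2 * π - α = 0 - α + π + π by ring, two_mul, add_div]
  exact add_le_add (integral_abs_sin_rpow_le hs hs0 _) (integral_abs_sin_rpow_le hs hs0 _)

lemma abs_mul_abs_sin_le_norm_circleMap_sub (c a : ℂ) (R θ : ℝ) :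
    |R| * |Real.sin (θ - (a - c).arg)| ≤ ‖circleMap c R θ - a‖ := by
  have rotate : circleMap c R θ - a = (R * Complex.exp ((θ - (a - c).arg : ℝ) * Complex.I) -
      ‖a - c‖) * Complex.exp ((a - c).arg * Complex.I) := by
    rw [sub_mul, Complex.norm_mul_exp_arg_mul_I, mul_assoc, ← Complex.exp_add, ← add_mul,
      ← Complex.ofReal_add, sub_add_cancel, circleMap]
    ring
  rw [rotate, norm_mul, Complex.norm_exp_ofReal_mul_I, mul_one]
  refine le_of_eq_of_le ?_ (Complex.abs_im_le_norm _)
  rw [Complex.sub_im, Complex.im_ofReal_mul, Complex.exp_ofReal_mul_I_im, Complex.ofReal_im,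
    sub_zero, abs_mul]

-- Only almost everywhere: for `s < 0`, the junk value `0 ^ s = 0` spoils it at the zeros of `sin`.
lemma ae_norm_circleMap_sub_rpow_le (c a : ℂ) {R : ℝ} (hR : R ≠ 0) (hs0 : s ≤ 0) :
    ∀ᵐ θ : ℝ, ‖circleMap c R θ - a‖ ^ s ≤ |R| ^ s * |Real.sin (θ - (a - c).arg)| ^ s := by
  filter_upwards [ae_sin_sub_ne_zero (a - c).arg] with θ hθ
  rw [← Real.mul_rpow (abs_nonneg R) (abs_nonneg _)]
  exact Real.rpow_le_rpow_of_nonpos (by positivity)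
    (abs_mul_abs_sin_le_norm_circleMap_sub c a R θ) hs0

lemma circleIntegrable_norm_sub_rpow (c a : ℂ) (R : ℝ) (hs : -1 < s) (hs0 : s ≤ 0) :
    CircleIntegrable (fun z ↦ ‖z - a‖ ^ s) c R := by
  obtain rfl | hR := eq_or_ne R 0
  · exact circleIntegrable_zero_radius
  have hsin : IntervalIntegrable (fun θ ↦ |R| ^ s * |Real.sin (θ - (a - c).arg)| ^ s)
      volume 0 (2 * π) :=
    (intervalIntegrable_abs_sin_sub_rpow hs hs0 _ _ _).const_mul _
  refine hsin.mono_fun' ?_ (ae_restrict_of_ae ?_)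
  · exact (((measurable_circleMap c R).sub_const a).norm.pow_const s).aestronglyMeasurable
  · filter_upwards [ae_norm_circleMap_sub_rpow_le c a hR hs0] with θ hθ
    rwa [Real.norm_of_nonneg (by positivity)]

end

lemma circ_eq_circleMap (r θ : ℝ) : circ r θ = circleMap 0 r θ :=
  (circleMap_zero r θ).symm

/-- For every `a ∈ ℂ`, `0 < δ < 1` and `r > 0`:
`∫₀^{2π} dθ / |re^{iθ} − a|^δ ≤ (2π/(1−δ)) (1/r^δ)`. -/
theorem circle_integral_inv_rpow_bound (a : ℂ) (δ r : ℝ) (hδ0 : 0 < δ) (hδ1 : δ < 1)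
    (hr : 0 < r) :
    ∫ θ in (0:ℝ)..(2 * Real.pi), 1 / ‖circ r θ - a‖ ^ δ ≤
      2 * Real.pi / (1 - δ) * (1 / r ^ δ) := by
  have hs : -1 < -δ := by linarith
  have hs0 : -δ ≤ 0 := by linarith
  calc ∫ θ in (0 : ℝ)..2 * π, 1 / ‖circ r θ - a‖ ^ δ
    _ = ∫ θ in (0 : ℝ)..2 * π, ‖circleMap 0 r θ - a‖ ^ (-δ) := by
      simp only [circ_eq_circleMap, one_div, Real.rpow_neg (norm_nonneg _)]
    _ ≤ ∫ θ in (0 : ℝ)..2 * π, |r| ^ (-δ) * |Real.sin (θ - (a - 0).arg)| ^ (-δ) :=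
      intervalIntegral.integral_mono_ae (by positivity)
        (circleIntegrable_norm_sub_rpow 0 a r hs hs0)
        ((intervalIntegrable_abs_sin_sub_rpow hs hs0 _ _ _).const_mul _)
        (ae_norm_circleMap_sub_rpow_le 0 a hr.ne' hs0)
    _ = |r| ^ (-δ) * ∫ θ in (0 : ℝ)..2 * π, |Real.sin (θ - (a - 0).arg)| ^ (-δ) :=
      intervalIntegral.integral_const_mul _ _
    _ ≤ |r| ^ (-δ) * (2 * π / (-δ + 1)) := by
      gcongr
      exact integral_abs_sin_sub_rpow_le hs hs0 _
    _ = 2 * π / (1 - δ) * (1 / r ^ δ) := by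
      rw [abs_of_pos hr, Real.rpow_neg hr.le, one_div, mul_comm, neg_add_eq_sub]
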